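/- arXiv:2507.03361 — 5 statements merged into one kernel-verified Lean document; each statement's English description precedes it below -/
import Mathlib

section
/- Let n ∈ ℕ, let ε ∈ (0,1), δ ∈ (0,1), and Δ ≥ 0. Let x, x' : Fin n → ℝ satisfy √(∑_{i} (x i − x' i)²) ≤ Δ, and let σ > 0 satisfy σ ≥ Δ·√(2·ln(1.25/δ))/ε. Let μ_x denote the product measure on (Fin n → ℝ) whose i-th factor is the Gaussian distribution N(x i, σ²), and similarly μ_{x'}. Then for every measurable set Z ⊆ (Fin n → ℝ): μ_x(Z) ≤ e^ε · μ_{x'}(Z) + δ. -/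
/-!
Let `p` and `q` be the Gaussian laws centred at `x` and `x'`, and let `L = log (dp/dq)` be the
privacy loss, a sum of affine functions of the coordinates. Suppose that `lam` and `C ≥ 0` satisfy
`1 ≤ exp (-u) + C * exp (lam * u)` for every real `u`. Taking `u = L - ε` and integrating over `Z`
against `p` gives

  `p Z ≤ exp ε * q Z + C * exp (-lam * ε) * 𝔼_p[exp (lam * L)]`,

because `exp (-L)` is the density of `q` with respect to `p` (`pi_gaussianReal_eq_withDensity`).
With `s = ∑ (x i - x' i)² / σ²`, the Gaussian moment generating function evaluates the last term as
`C * exp (lam * (lam + 1) * s / 2 - lam * ε)` (`lintegral_exp_sum_privacyLoss`).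

It remains to choose `lam` and `C` so that this is at most `δ` (`exists_chernoff_params`).
Put `k = 2 log (1.25 / δ)`; the assumption on `σ` says `s * k ≤ ε²`. For `k ≥ 5/6` the minimizer
`lam = k / ε - 1 / 2` of the exponent, with `C = 1 / (1 + lam)` from Bernoulli's inequality, works.
For `k < 5/6`, that is for `δ` close to `1`, `lam = 1` and `C = 1 / 4` work, since `δ < 1` forces
`k > 4/9`. This exponential bound replaces the usual estimate of the Gaussian tail of `L`.
-/

open MeasureTheory ProbabilityTheory
open scoped NNReal ENNReal

/-- The one-dimensional privacy loss: the logarithm of the density of `N(m, v)` with respect to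
`N(m', v)`, at the point `z`. -/
noncomputable def privacyLoss (m m' v z : ℝ) : ℝ :=
  ((z - m') ^ 2 - (z - m) ^ 2) / (2 * v)

lemma measurable_privacyLoss (m m' v : ℝ) : Measurable (privacyLoss m m' v) := by
  unfold privacyLoss; fun_prop

lemma gaussianReal_eq_withDensity (m m' : ℝ) {v : ℝ≥0} (hv : v ≠ 0) :
    gaussianReal m' v = (gaussianReal m v).withDensity
      (fun z => ENNReal.ofReal (Real.exp (-privacyLoss m m' v z))) := by
  rw [gaussianReal_of_var_ne_zero m' hv, gaussianReal_of_var_ne_zero m hv,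
    ← withDensity_mul _ (measurable_gaussianPDF m v)
      (by have := measurable_privacyLoss m m' v; fun_prop)]
  congr 1
  ext z
  simp only [gaussianPDF, gaussianPDFReal, Pi.mul_apply, privacyLoss]
  rw [← ENNReal.ofReal_mul (by positivity), mul_assoc (√(2 * Real.pi * v))⁻¹,
    ← Real.exp_add]
  congr 3
  have : (v : ℝ) ≠ 0 := by exact_mod_cast hv
  field_simp
  ring

/-- The exponential moments of the privacy loss, read off the Gaussian moment generating
function since `privacyLoss` is affine in `z`. -/
lemma lintegral_exp_privacyLoss (m m' lam : ℝ) {v : ℝ≥0} (hv : v ≠ 0) :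
    ∫⁻ z, ENNReal.ofReal (Real.exp (lam * privacyLoss m m' v z)) ∂(gaussianReal m v)
      = ENNReal.ofReal (Real.exp (lam * (lam + 1) * ((m - m') ^ 2 / v) / 2)) := by
  have hv' : (v : ℝ) ≠ 0 := by exact_mod_cast hv
  have h1 : ∀ z, Real.exp (lam * privacyLoss m m' v z)
      = Real.exp (lam * (m' ^ 2 - m ^ 2) / (2 * v)) * Real.exp (lam * (m - m') / v * z) := by
    intro z
    rw [← Real.exp_add, privacyLoss]
    congr 1
    field_simp
    ring
  simp_rw [h1]
  rw [← ofReal_integral_eq_lintegral_ofReal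
    ((integrable_exp_mul_gaussianReal _).const_mul _)
    (Filter.Eventually.of_forall fun z => by positivity), integral_const_mul]
  have h2 := congrFun (mgf_fun_id_gaussianReal (μ := m) (v := v)) (lam * (m - m') / v)
  rw [mgf] at h2
  rw [h2, ← Real.exp_add]
  congr 2
  field_simp
  ring

lemma lintegral_pi_prod {ι : Type*} [Fintype ι] (μ : ι → Measure ℝ)
    [∀ i, IsProbabilityMeasure (μ i)] (f : ι → ℝ → ℝ≥0∞) (hf : ∀ i, Measurable (f i)) :
    ∫⁻ z, ∏ i, f i (z i) ∂(Measure.pi μ) = ∏ i, ∫⁻ z, f i z ∂(μ i) := by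
  rw [lintegral_prod_eq_prod_lintegral_of_indepFun (μ := Measure.pi μ) Finset.univ
    (fun i (z : ι → ℝ) => f i (z i))
    (iIndepFun_pi fun i => (hf i).aemeasurable)
    (fun i => (hf i).comp (measurable_pi_apply i))]
  refine Finset.prod_congr rfl fun i _ => ?_
  exact (measurePreserving_eval μ i).lintegral_comp (hf i)

lemma pi_withDensity {ι : Type*} [Fintype ι] (μ ν : ι → Measure ℝ)
    [∀ i, IsProbabilityMeasure (μ i)] [∀ i, IsProbabilityMeasure (ν i)]
    (f : ι → ℝ → ℝ≥0∞) (hf : ∀ i, Measurable (f i))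
    (h : ∀ i, ν i = (μ i).withDensity (f i)) :
    Measure.pi ν = (Measure.pi μ).withDensity (fun z => ∏ i, f i (z i)) := by
  refine Measure.pi_eq fun s hs => ?_
  rw [withDensity_apply _ (MeasurableSet.univ_pi hs),
    ← lintegral_indicator (MeasurableSet.univ_pi hs)]
  -- The indicator of a box is the product of the indicators of its sides.
  have h1 : (Set.univ.pi s).indicator (fun z : ι → ℝ => ∏ i, f i (z i))
      = fun z => ∏ i, (s i).indicator (f i) (z i) := by
    ext z
    by_cases hz : z ∈ Set.univ.pi s
    · rw [Set.indicator_of_mem hz]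
      exact Finset.prod_congr rfl fun i _ =>
        (Set.indicator_of_mem (hz i (Set.mem_univ i)) _).symm
    · rw [Set.indicator_of_notMem hz]
      simp only [Set.mem_univ_pi, not_forall] at hz
      obtain ⟨i, hi⟩ := hz
      exact (Finset.prod_eq_zero (Finset.mem_univ i) (Set.indicator_of_notMem hi _)).symm
  rw [h1, lintegral_pi_prod μ _ fun i => (hf i).indicator (hs i)]
  refine Finset.prod_congr rfl fun i _ => ?_
  rw [lintegral_indicator (hs i), h i, withDensity_apply _ (hs i)]

lemma prod_ofReal_exp {ι : Type*} [Fintype ι] (g : ι → ℝ) :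
    ∏ i, ENNReal.ofReal (Real.exp (g i)) = ENNReal.ofReal (Real.exp (∑ i, g i)) := by
  rw [Real.exp_sum, ENNReal.ofReal_prod_of_nonneg fun i _ => (Real.exp_pos _).le]

lemma pi_gaussianReal_eq_withDensity {n : ℕ} (x x' : Fin n → ℝ) {v : ℝ≥0} (hv : v ≠ 0) :
    Measure.pi (fun i => gaussianReal (x' i) v)
      = (Measure.pi (fun i => gaussianReal (x i) v)).withDensity
        (fun z => ENNReal.ofReal (Real.exp (-∑ i, privacyLoss (x i) (x' i) v (z i)))) := by
  rw [pi_withDensity (fun i => gaussianReal (x i) v) (fun i => gaussianReal (x' i) v)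
    (fun i z => ENNReal.ofReal (Real.exp (-privacyLoss (x i) (x' i) v z)))
    (fun i => by have := measurable_privacyLoss (x i) (x' i) v; fun_prop)
    (fun i => gaussianReal_eq_withDensity (x i) (x' i) hv)]
  simp_rw [prod_ofReal_exp, Finset.sum_neg_distrib]

lemma lintegral_exp_sum_privacyLoss {n : ℕ} (x x' : Fin n → ℝ) (lam : ℝ) {v : ℝ≥0}
    (hv : v ≠ 0) :
    ∫⁻ z, ENNReal.ofReal (Real.exp (lam * ∑ i, privacyLoss (x i) (x' i) v (z i)))
        ∂(Measure.pi fun i => gaussianReal (x i) v)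
      = ENNReal.ofReal (Real.exp (lam * (lam + 1) * ((∑ i, (x i - x' i) ^ 2) / v) / 2)) := by
  simp_rw [Finset.mul_sum, ← prod_ofReal_exp]
  rw [lintegral_pi_prod _
    (fun i z => ENNReal.ofReal (Real.exp (lam * privacyLoss (x i) (x' i) v z)))
    (fun i => by have := measurable_privacyLoss (x i) (x' i) v; fun_prop)]
  simp_rw [lintegral_exp_privacyLoss _ _ _ hv, prod_ofReal_exp]
  rw [Finset.sum_div, Finset.mul_sum, Finset.sum_div]

/-- Bernoulli's inequality for `exp u`, divided by `(1 + lam) * exp u`, with the constant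
`lam / (1 + lam)` relaxed to `1`. -/
lemma one_le_exp_neg_add {lam : ℝ} (hl : 0 ≤ lam) (u : ℝ) :
    1 ≤ Real.exp (-u) + 1 / (1 + lam) * Real.exp (lam * u) := by
  have h1 := one_add_mul_self_le_rpow_one_add (s := Real.exp u - 1)
    (by linarith [Real.exp_pos u]) (p := 1 + lam) (by linarith)
  rw [add_sub_cancel, ← Real.exp_mul] at h1
  have h2 : Real.exp (u * (1 + lam)) = Real.exp u * Real.exp (lam * u) := by
    rw [← Real.exp_add]; ring_nf
  rw [h2] at h1
  have h3 : Real.exp u * Real.exp (-u) = 1 := by rw [← Real.exp_add]; simp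
  have hu := Real.exp_pos u
  have h4 : 0 < 1 + lam := by linarith
  have h5 : Real.exp u ≤ 1 + 1 / (1 + lam) * (Real.exp u * Real.exp (lam * u)) := by
    rw [← mul_le_mul_iff_right₀ h4]
    have : (1 + lam) * (1 + 1 / (1 + lam) * (Real.exp u * Real.exp (lam * u)))
      = 1 + lam + Real.exp u * Real.exp (lam * u) := by field_simp
    rw [this]; linarith
  rw [← mul_le_mul_iff_right₀ hu]
  linear_combination h5 - h3

/-- The case `lam = 1` with the sharp constant, which is `(exp u - 2)² ≥ 0`. -/
lemma one_le_exp_neg_add_quarter (u : ℝ) :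
    1 ≤ Real.exp (-u) + 1 / 4 * Real.exp (1 * u) := by
  have h3 : Real.exp u * Real.exp (-u) = 1 := by rw [← Real.exp_add]; simp
  have hu := Real.exp_pos u
  rw [one_mul, ← mul_le_mul_iff_right₀ hu]
  linarith [sq_nonneg (Real.exp u - 2)]

/-- Since `exp 2 ≤ 1.25 ^ 9`. -/
lemma four_ninths_le : (4 / 9 : ℝ) ≤ 2 * Real.log (5 / 4) := by
  have h : Real.exp 2 ≤ (5 / 4 : ℝ) ^ 9 := by
    have h1 := Real.exp_one_lt_d9
    have h2 : Real.exp 2 = Real.exp 1 ^ 2 := by rw [← Real.exp_nat_mul]; norm_num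
    rw [h2]
    calc Real.exp 1 ^ 2 ≤ 2.7182818286 ^ 2 := by gcongr
      _ ≤ _ := by norm_num
  have h3 := (Real.le_log_iff_exp_le (by positivity)).2 h
  rw [Real.log_pow] at h3
  push_cast at h3
  linarith

/-- The choice of the Chernoff exponent `lam`, where `s` stands for the squared distance of the
two centres divided by the variance. -/
lemma exists_chernoff_params {ε δ s : ℝ} (hε : ε ∈ Set.Ioo (0:ℝ) 1) (hδ : δ ∈ Set.Ioo (0:ℝ) 1)
    (hs : s * (2 * Real.log (1.25 / δ)) ≤ ε ^ 2) :
    ∃ lam C : ℝ, 0 ≤ C ∧ (∀ u, 1 ≤ Real.exp (-u) + C * Real.exp (lam * u)) ∧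
      C * Real.exp (lam * (lam + 1) * s / 2 - lam * ε) ≤ δ := by
  obtain ⟨hε0, hε1⟩ := hε
  obtain ⟨hδ0, hδ1⟩ := hδ
  set k := 2 * Real.log (1.25 / δ) with hk
  have hδk : δ = 5 / 4 * Real.exp (-k / 2) := by
    have : -k / 2 = -Real.log (1.25 / δ) := by rw [hk]; ring
    rw [this, Real.exp_neg, Real.exp_log (by positivity)]
    field_simp
    norm_num
  have hk49 : 4 / 9 ≤ k := by
    have h1 : (5 / 4 : ℝ) ≤ 1.25 / δ := by
      rw [le_div_iff₀ hδ0]; norm_num; linarith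
    linarith [four_ninths_le, Real.log_le_log (by norm_num) h1]
  have hk0 : 0 < k := by linarith
  have hs' : s ≤ ε ^ 2 / k := by rwa [le_div_iff₀ hk0]
  rcases le_total k (5 / 6) with hk56 | hk56
  · refine ⟨1, 1 / 4, by norm_num, one_le_exp_neg_add_quarter, ?_⟩
    have he : Real.exp (3 / 2) ≤ 5 := by
      rw [← pow_le_pow_iff_left₀ (Real.exp_pos _).le (by norm_num) (two_ne_zero),
        ← Real.exp_nat_mul]
      have h2 : Real.exp ((2 : ℕ) * (3 / 2)) = Real.exp 1 ^ 3 := by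
        rw [← Real.exp_nat_mul]; norm_num
      rw [h2]
      calc Real.exp 1 ^ 3 ≤ 2.7182818286 ^ 3 := by gcongr; exact Real.exp_one_lt_d9.le
        _ ≤ _ := by norm_num
    have hexp : 1 * (1 + 1) * s / 2 - 1 * ε ≤ 3 / 2 + -k / 2 := by
      have : ε ^ 2 / k ≤ 3 / 2 - k / 2 + ε := by
        rw [div_le_iff₀ hk0]
        nlinarith [mul_nonneg (sub_nonneg.2 hε1.le) (by linarith : 0 ≤ 1 + ε - k),
          mul_nonneg (sub_nonneg.2 hk49) (sub_nonneg.2 hk56)]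
      linarith
    calc 1 / 4 * Real.exp (1 * (1 + 1) * s / 2 - 1 * ε)
        ≤ 1 / 4 * (Real.exp (3 / 2) * Real.exp (-k / 2)) := by
          rw [← Real.exp_add]; gcongr
      _ ≤ 1 / 4 * (5 * Real.exp (-k / 2)) := by gcongr
      _ = δ := by rw [hδk]; ring
  · have hkε : k ≤ k / ε := by rw [le_div_iff₀ hε0]; nlinarith
    set lam := k / ε - 1 / 2 with hlam
    have hl : 1 / 3 ≤ lam := by linarith
    refine ⟨lam, 1 / (1 + lam), by positivity, one_le_exp_neg_add (by linarith), ?_⟩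
    have he : Real.exp (1 / 2) ≤ 5 / 3 := by
      rw [← pow_le_pow_iff_left₀ (Real.exp_pos _).le (by norm_num) (two_ne_zero),
        ← Real.exp_nat_mul]
      have h2 : Real.exp ((2 : ℕ) * (1 / 2)) = Real.exp 1 := by norm_num
      rw [h2]
      linarith [Real.exp_one_lt_d9]
    have hC : 1 / (1 + lam) ≤ 3 / 4 := by
      rw [div_le_iff₀ (by linarith)]; linarith
    have hexp : lam * (lam + 1) * s / 2 - lam * ε ≤ 1 / 2 + -k / 2 := by
      have h1 : lam * (lam + 1) * s ≤ lam * (lam + 1) * (ε ^ 2 / k) := by gcongr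
      have h2 : lam * (lam + 1) * (ε ^ 2 / k) / 2 - lam * ε
          = -k / 2 + ε / 2 - ε ^ 2 / (8 * k) := by
        rw [hlam]; field_simp; ring
      have h3 : 0 ≤ ε ^ 2 / (8 * k) := by positivity
      linarith
    calc 1 / (1 + lam) * Real.exp (lam * (lam + 1) * s / 2 - lam * ε)
        ≤ 3 / 4 * (Real.exp (1 / 2) * Real.exp (-k / 2)) := by
          rw [← Real.exp_add]; gcongr
      _ ≤ 3 / 4 * (5 / 3 * Real.exp (-k / 2)) := by gcongr
      _ = δ := by rw [hδk]; ring

/-- Lemma 1: the Gaussian mechanism is (ε, δ)-differentially private. -/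
theorem gaussian_mechanism
    (n : ℕ) (ε δ : ℝ) (hε : ε ∈ Set.Ioo (0:ℝ) 1) (hδ : δ ∈ Set.Ioo (0:ℝ) 1)
    (Δ : ℝ) (hΔ : 0 ≤ Δ)
    (x x' : Fin n → ℝ)
    (hsens : Real.sqrt (∑ i, (x i - x' i) ^ 2) ≤ Δ)
    (σ : ℝ) (hσ : 0 < σ)
    (hσge : Δ * Real.sqrt (2 * Real.log (1.25 / δ)) / ε ≤ σ)
    (Z : Set (Fin n → ℝ)) (hZ : MeasurableSet Z) :
    Measure.pi (fun i => gaussianReal (x i) (Real.toNNReal (σ ^ 2))) Z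
      ≤ ENNReal.ofReal (Real.exp ε)
          * Measure.pi (fun i => gaussianReal (x' i) (Real.toNNReal (σ ^ 2))) Z
        + ENNReal.ofReal δ := by
  have hσ2 : 0 < σ ^ 2 := by positivity
  set v : ℝ≥0 := Real.toNNReal (σ ^ 2) with hvdef
  have hv : v ≠ 0 := (Real.toNNReal_pos.2 hσ2).ne'
  have hvσ : (v : ℝ) = σ ^ 2 := Real.coe_toNNReal _ hσ2.le
  have hlog : 0 ≤ 2 * Real.log (1.25 / δ) := by
    have : (1 : ℝ) ≤ 1.25 / δ := by
      rw [le_div_iff₀ hδ.1]; norm_num; linarith [hδ.2]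
    linarith [Real.log_nonneg this]
  have hs : (∑ i, (x i - x' i) ^ 2) / v * (2 * Real.log (1.25 / δ)) ≤ ε ^ 2 := by
    rw [hvσ, div_mul_eq_mul_div, div_le_iff₀ hσ2]
    have h1 : ∑ i, (x i - x' i) ^ 2 ≤ Δ ^ 2 := (Real.sqrt_le_left hΔ).1 hsens
    have h2 : Δ * Real.sqrt (2 * Real.log (1.25 / δ)) ≤ σ * ε := (div_le_iff₀ hε.1).1 hσge
    calc (∑ i, (x i - x' i) ^ 2) * (2 * Real.log (1.25 / δ))
        ≤ Δ ^ 2 * (2 * Real.log (1.25 / δ)) := by gcongr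
      _ = (Δ * Real.sqrt (2 * Real.log (1.25 / δ))) ^ 2 := by
          rw [mul_pow, Real.sq_sqrt hlog]
      _ ≤ (σ * ε) ^ 2 := by gcongr
      _ = ε ^ 2 * σ ^ 2 := by ring
  obtain ⟨lam, C, hC, hu, hCδ⟩ := exists_chernoff_params hε hδ hs
  set P := Measure.pi (fun i => gaussianReal (x i) v) with hP
  set L : (Fin n → ℝ) → ℝ := fun z => ∑ i, privacyLoss (x i) (x' i) v (z i) with hL
  have hLm : Measurable L := Finset.measurable_fun_sum _ fun i _ =>
    (measurable_privacyLoss (x i) (x' i) v).comp (measurable_pi_apply i)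
  have hpt : ∀ z, (1 : ℝ≥0∞) ≤ ENNReal.ofReal (Real.exp ε) * ENNReal.ofReal (Real.exp (-L z))
      + ENNReal.ofReal (C * Real.exp (-(lam * ε))) * ENNReal.ofReal (Real.exp (lam * L z)) := by
    intro z
    rw [← ENNReal.ofReal_mul (by positivity), ← ENNReal.ofReal_mul (by positivity),
      ← ENNReal.ofReal_add (by positivity) (by positivity), ENNReal.one_le_ofReal, mul_assoc,
      ← Real.exp_add, ← Real.exp_add]
    convert hu (L z - ε) using 3
    · ring_nf
    · ring_nf
  have hq : ∫⁻ z in Z, ENNReal.ofReal (Real.exp (-L z)) ∂P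
      = Measure.pi (fun i => gaussianReal (x' i) v) Z := by
    rw [pi_gaussianReal_eq_withDensity x x' hv, withDensity_apply _ hZ]
  calc P Z = ∫⁻ z in Z, 1 ∂P := by simp
    _ ≤ ∫⁻ z in Z, (ENNReal.ofReal (Real.exp ε) * ENNReal.ofReal (Real.exp (-L z))
      + ENNReal.ofReal (C * Real.exp (-(lam * ε))) * ENNReal.ofReal (Real.exp (lam * L z))) ∂P :=
        lintegral_mono hpt
    _ = ENNReal.ofReal (Real.exp ε) * ∫⁻ z in Z, ENNReal.ofReal (Real.exp (-L z)) ∂P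
      + ENNReal.ofReal (C * Real.exp (-(lam * ε)))
        * ∫⁻ z in Z, ENNReal.ofReal (Real.exp (lam * L z)) ∂P := by
        rw [lintegral_add_left (by fun_prop), lintegral_const_mul _ (by fun_prop),
          lintegral_const_mul _ (by fun_prop)]
    _ ≤ ENNReal.ofReal (Real.exp ε) * Measure.pi (fun i => gaussianReal (x' i) v) Z
      + ENNReal.ofReal (C * Real.exp (-(lam * ε)))
        * ∫⁻ z, ENNReal.ofReal (Real.exp (lam * L z)) ∂P := by
        rw [hq]
        gcongr
        exact Measure.restrict_le_self
    _ ≤ _ := by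
        gcongr
        rw [lintegral_exp_sum_privacyLoss x x' lam hv, ← ENNReal.ofReal_mul (by positivity),
          mul_assoc, ← Real.exp_add]
        refine ENNReal.ofReal_le_ofReal (le_trans (le_of_eq ?_) hCδ)
        ring_nf
end

section
/- Let T, n, m be positive integers, set L = ⌈log₂(T+1)⌉, and let V, V' : Fin T → Fin n → ℤ be m-neighboring update sequences. For i ∈ Fin n, l ∈ {0, 1, …, L}, and k ∈ ℕ, define the tree node count c_{i,l,k}(V) = ∑_{t < T, t ∈ D(l,k)} V t i. Then ∑_{i ∈ Fin n} ∑_{l=0}^{L} ∑_{k ∈ ℕ} (c_{i,l,k}(V) − c_{i,l,k}(V'))² ≤ m·(L+1). -/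
/-!
At a fixed level `l`, time `t` lies in exactly one dyadic interval `D(l,k)`, namely the one with
`k = t / 2 ^ l`. Hence the node differences of one counter at level `l` split the increment
differences `d t = V t i - V' t i` into disjoint blocks. If `∑ |d t| ≤ 1`, each block sum has
absolute value at most `1`, so its square is at most the sum of `|d t|` over the block, and summing
over the blocks gives at most `∑ |d t| ≤ 1` per level (`tsum_sq_block_le_one`). There are `L + 1`
levels and at most `m` counters with a nonzero contribution.
-/

/-- Two update sequences `V V' : Fin T → Fin n → ℤ` are `m`-neighboring. -/
def MNeighboring (T n m : ℕ) (V V' : Fin T → Fin n → ℤ) : Prop :=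
  ∃ I : Finset (Fin n), I.card ≤ m ∧
    (∀ i ∈ I, ∑ t, |V t i - V' t i| ≤ 1) ∧
    (∀ j ∉ I, ∀ t, V t j = V' t j)

/-- The exact count, for counter `i`, of the binary-tree node at level `l` and
position `k`, i.e. the sum of the increments of counter `i` over the dyadic
interval `D(l,k) = {t : k·2^l ≤ t < (k+1)·2^l}`. -/
noncomputable def treeNodeCount (T n : ℕ) (V : Fin T → Fin n → ℤ)
    (i : Fin n) (l k : ℕ) : ℝ :=
  ∑ t : Fin T, if k * 2 ^ l ≤ (t : ℕ) ∧ (t : ℕ) < (k + 1) * 2 ^ l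
    then (V t i : ℝ) else 0

lemma mem_dyadic_iff (t l k : ℕ) :
    (k * 2 ^ l ≤ t ∧ t < (k + 1) * 2 ^ l) ↔ t / 2 ^ l = k := by
  rw [Nat.div_eq_iff (by positivity)]
  have : 0 < 2 ^ l := by positivity
  rw [add_mul, one_mul]
  omega

lemma treeNodeCount_sub (T n : ℕ) (V V' : Fin T → Fin n → ℤ) (i : Fin n) (l k : ℕ) :
    treeNodeCount T n V i l k - treeNodeCount T n V' i l k =
      ∑ t : Fin T, if (t : ℕ) / 2 ^ l = k then ((V t i - V' t i : ℤ) : ℝ) else 0 := by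
  unfold treeNodeCount
  rw [← Finset.sum_sub_distrib]
  refine Finset.sum_congr rfl fun t _ => ?_
  simp only [mem_dyadic_iff]
  split_ifs <;> simp

/-- If `d` has ℓ1-norm at most `1`, then the family of its sums over the dyadic intervals of one
level has squared ℓ2-norm at most `1`. -/
lemma tsum_sq_block_le_one (T l : ℕ) (d : Fin T → ℝ) (hd : ∑ t, |d t| ≤ 1) :
    ∑' k : ℕ, (∑ t : Fin T, if (t : ℕ) / 2 ^ l = k then d t else 0) ^ 2 ≤ 1 := by
  -- Only blocks with index below `T` can be nonempty, so the series is a finite sum.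
  rw [tsum_eq_sum (s := Finset.range T)]
  · calc ∑ k ∈ Finset.range T, (∑ t : Fin T, if (t : ℕ) / 2 ^ l = k then d t else 0) ^ 2
        ≤ ∑ k ∈ Finset.range T, ∑ t : Fin T, if (t : ℕ) / 2 ^ l = k then |d t| else 0 := by
          refine Finset.sum_le_sum fun k _ => ?_
          have h1 : |∑ t : Fin T, if (t : ℕ) / 2 ^ l = k then d t else 0| ≤
              ∑ t : Fin T, if (t : ℕ) / 2 ^ l = k then |d t| else 0 := by
            refine (Finset.abs_sum_le_sum_abs _ _).trans (Finset.sum_le_sum fun t _ => ?_)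
            split_ifs <;> simp
          have h2 : (∑ t : Fin T, if (t : ℕ) / 2 ^ l = k then |d t| else 0) ≤ 1 := by
            refine (Finset.sum_le_sum fun t _ => ?_).trans hd
            split_ifs <;> simp
          rw [← sq_abs]
          nlinarith [abs_nonneg (∑ t : Fin T, if (t : ℕ) / 2 ^ l = k then d t else 0)]
      _ = ∑ t : Fin T, |d t| := by
          rw [Finset.sum_comm]
          refine Finset.sum_congr rfl fun t _ => ?_
          rw [Finset.sum_ite_eq, if_pos]
          exact Finset.mem_range.2 ((Nat.div_le_self _ _).trans_lt t.2)
      _ ≤ 1 := hd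
  · intro k hk
    have h0 : (∑ t : Fin T, if (t : ℕ) / 2 ^ l = k then d t else 0) = 0 := by
      refine Finset.sum_eq_zero fun t _ => if_neg ?_
      rintro rfl
      exact hk (Finset.mem_range.2 ((Nat.div_le_self _ _).trans_lt t.2))
    simp [h0]

/-- The sensitivity claim in the proof of Theorem 1: on `m`-neighboring inputs,
the squared ℓ2-distance between the collections of exact binary-tree node
counts is at most `m·(L+1)`, where `L = ⌈log₂(T+1)⌉`. -/
theorem treeNodeCount_l2_sensitivity
    (T n m : ℕ) (hT : 0 < T) (hn : 0 < n) (hm : 0 < m)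
    (L : ℕ) (hL : L = ⌈Real.logb 2 (T + 1)⌉₊)
    (V V' : Fin T → Fin n → ℤ) (hVV' : MNeighboring T n m V V') :
    ∑ i : Fin n, ∑ l ∈ Finset.range (L + 1), ∑' k : ℕ,
        (treeNodeCount T n V i l k - treeNodeCount T n V' i l k) ^ 2
      ≤ m * (L + 1) := by
  obtain ⟨I, hI, hin, hout⟩ := hVV'
  simp only [treeNodeCount_sub]
  rw [← Finset.sum_subset (Finset.subset_univ I)]
  · calc _ ≤ ∑ i ∈ I, ∑ l ∈ Finset.range (L + 1), (1 : ℝ) := by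
          refine Finset.sum_le_sum fun i hi => Finset.sum_le_sum fun l _ => ?_
          exact tsum_sq_block_le_one T l _ (by exact_mod_cast hin i hi)
      _ = I.card * (L + 1) := by simp [mul_add]
      _ ≤ m * (L + 1) := by gcongr
  · intro j _ hj
    simp [hout j hj]
end

section
/- Let d, w, T be positive integers, let U be a type (the input universe), and let h : Fin d → U → Fin w be a family of hash functions. For a stream x : Fin T → U, for i ∈ Fin d, j ∈ Fin w, and k ∈ ℕ, define c_{i,j,k}(x) = #{t < T : (k−1)·w + (j+1) ≤ t < k·w + (j+1) and h i (x t) = j} (the number of arrivals hashed to cell (i,j) during the k-th flush interval of column j). Suppose x, x' : Fin T → U agree at every index except one index l ∈ Fin T. Then: (a) for every i ∈ Fin d and j ∈ Fin w, ∑_{k ∈ ℕ} |c_{i,j,k}(x) − c_{i,j,k}(x')| ≤ 1; and (b) the set {(i,j) ∈ Fin d × Fin w : ∃ k, c_{i,j,k}(x) ≠ c_{i,j,k}(x')} has cardinality at most 2·d. -/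
/-!
The flush intervals of a fixed column are pairwise disjoint, so the index `l` at which the streams
differ lies in at most one of them. Counts over intervals missing `l` agree, and the count over the
interval containing `l` changes by at most one (`card_filter_le_card_filter_add_one`), which
bounds the sum for each cell by 1. A cell `(i, j)` can only be affected if `j` is the hash
of `x l` or of `x' l` under `h i` (`epochCount_congr`), which leaves at most two cells for each `i`.
-/

/-- The `k`-th epoch count of cell `(i,j)` of the Lazy Sketch on stream `x`:
the number of arrivals `t` in the `k`-th flush interval
`(k−1)·w + (j+1) ≤ t < k·w + (j+1)` of column `j` that hash to cell `(i,j)`. -/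
def epochCount (d w T : ℕ) {U : Type*} (h : Fin d → U → Fin w)
    (x : Fin T → U) (i : Fin d) (j : Fin w) (k : ℕ) : ℕ :=
  (Finset.univ.filter (fun t : Fin T =>
      (k - 1) * w + ((j : ℕ) + 1) ≤ (t : ℕ) ∧
      (t : ℕ) < k * w + ((j : ℕ) + 1) ∧
      h i (x t) = j)).card

lemma card_filter_le_card_filter_add_one {α : Type*} [Fintype α] (l : α)
    (p q : α → Prop) [DecidablePred p] [DecidablePred q] (hpq : ∀ t, t ≠ l → (p t ↔ q t)) :
    (Finset.univ.filter p).card ≤ (Finset.univ.filter q).card + 1 := by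
  classical
  refine (Finset.card_le_card (t := insert l (Finset.univ.filter q)) ?_).trans
    (Finset.card_insert_le _ _)
  intro t ht
  by_cases htl : t = l
  · simp [htl]
  · simpa [htl, ← hpq t htl] using ht

/-- The epoch interval `(k - 1) * w + (j + 1) ≤ t < k * w + (j + 1)` containing a given `t` is
unique. The subtraction is truncated, so the interval for `k = 0` is empty. -/
lemma epoch_unique {w j t k k' : ℕ}
    (h1 : (k - 1) * w + (j + 1) ≤ t) (h2 : t < k * w + (j + 1))
    (h1' : (k' - 1) * w + (j + 1) ≤ t) (h2' : t < k' * w + (j + 1)) : k = k' := by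
  rcases lt_trichotomy k k' with hk | hk | hk
  · have := Nat.mul_le_mul_right w (show k ≤ k' - 1 by omega)
    omega
  · exact hk
  · have := Nat.mul_le_mul_right w (show k' ≤ k - 1 by omega)
    omega

/-- The count of cell `(i, j)` in epoch `k` is unchanged when the modified index lies outside the
epoch, or when neither the old nor the new element hashes to the cell. -/
lemma epochCount_congr {d w T : ℕ} {U : Type*} (h : Fin d → U → Fin w)
    {x x' : Fin T → U} {l : Fin T} (hxx' : ∀ t : Fin T, t ≠ l → x t = x' t)
    {i : Fin d} {j : Fin w} {k : ℕ}
    (hl : (k - 1) * w + ((j : ℕ) + 1) ≤ (l : ℕ) → (l : ℕ) < k * w + ((j : ℕ) + 1) →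
      (h i (x l) = j ↔ h i (x' l) = j)) :
    epochCount d w T h x i j k = epochCount d w T h x' i j k := by
  unfold epochCount
  congr 1
  refine Finset.filter_congr fun t _ => ?_
  by_cases htl : t = l
  · subst htl
    tauto
  · rw [hxx' t htl]

lemma abs_epochCount_sub_le_one {d w T : ℕ} {U : Type*} (h : Fin d → U → Fin w)
    {x x' : Fin T → U} {l : Fin T} (hxx' : ∀ t : Fin T, t ≠ l → x t = x' t)
    (i : Fin d) (j : Fin w) (k : ℕ) :
    |(epochCount d w T h x i j k : ℝ) - (epochCount d w T h x' i j k : ℝ)| ≤ 1 := by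
  have h1 : epochCount d w T h x i j k ≤ epochCount d w T h x' i j k + 1 :=
    card_filter_le_card_filter_add_one l _ _ fun t ht => by rw [hxx' t ht]
  have h2 : epochCount d w T h x' i j k ≤ epochCount d w T h x i j k + 1 :=
    card_filter_le_card_filter_add_one l _ _ fun t ht => by rw [hxx' t ht]
  have h1' : (epochCount d w T h x i j k : ℝ) ≤ epochCount d w T h x' i j k + 1 := by
    exact_mod_cast h1
  have h2' : (epochCount d w T h x' i j k : ℝ) ≤ epochCount d w T h x i j k + 1 := by
    exact_mod_cast h2
  rw [abs_le]
  constructor <;> linarith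


/-- Key claim in the proof of Theorem 2 (LazySketch privacy): if two streams
differ in a single element, then (a) for each cell the total absolute
difference of the derived epoch-count streams is at most 1, and (b) at most
`2·d` cells have differing epoch-count streams; i.e. the derived update
streams to the `d·w` output counters are `2d`-neighboring. -/
theorem lazySketch_epoch_streams_neighboring
    (d w T : ℕ) (hd : 0 < d) (hw : 0 < w) (hT : 0 < T)
    {U : Type*} (h : Fin d → U → Fin w)
    (x x' : Fin T → U) (l : Fin T)
    (hxx' : ∀ t : Fin T, t ≠ l → x t = x' t) :
    (∀ (i : Fin d) (j : Fin w),
        ∑' k : ℕ, |(epochCount d w T h x i j k : ℝ)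
            - (epochCount d w T h x' i j k : ℝ)| ≤ 1) ∧
      Set.ncard {p : Fin d × Fin w |
          ∃ k : ℕ, epochCount d w T h x p.1 p.2 k
            ≠ epochCount d w T h x' p.1 p.2 k} ≤ 2 * d := by
  refine ⟨fun i j => ?_, ?_⟩
  · by_cases hk : ∃ k : ℕ, (k - 1) * w + ((j : ℕ) + 1) ≤ (l : ℕ) ∧
        (l : ℕ) < k * w + ((j : ℕ) + 1)
    · obtain ⟨k₀, h1, h2⟩ := hk
      rw [tsum_eq_single k₀]
      · exact abs_epochCount_sub_le_one h hxx' i j k₀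
      · intro k hne
        rw [epochCount_congr h hxx' fun h1' h2' => absurd (epoch_unique h1' h2' h1 h2) hne]
        simp
    · have hz : ∀ k, |(epochCount d w T h x i j k : ℝ)
          - (epochCount d w T h x' i j k : ℝ)| = 0 := fun k => by
        rw [epochCount_congr h hxx' fun h1' h2' => absurd ⟨k, h1', h2'⟩ hk]
        simp
      simp [hz]
  · have hsub : {p : Fin d × Fin w | ∃ k : ℕ, epochCount d w T h x p.1 p.2 k
          ≠ epochCount d w T h x' p.1 p.2 k} ⊆
        Set.range (fun i : Fin d => (i, h i (x l))) ∪
          Set.range (fun i : Fin d => (i, h i (x' l))) := by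
      rintro ⟨i, j⟩ ⟨k, hk⟩
      by_contra hn
      simp only [Set.mem_union, Set.mem_range, Prod.mk.injEq, exists_eq_left, not_or] at hn
      exact hk (epochCount_congr h hxx' fun _ _ => iff_of_false hn.1 hn.2)
    have hr : ∀ y : U, (Set.range (fun i : Fin d => (i, h i y))).ncard ≤ d := fun y => by
      rw [← Set.image_univ]
      exact (Set.ncard_image_le Set.finite_univ).trans (by simp [Set.ncard_univ])
    have h1 := Set.ncard_le_ncard hsub (Set.toFinite _)
    have h2 := Set.ncard_union_le (Set.range (fun i : Fin d => (i, h i (x l))))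
      (Set.range (fun i : Fin d => (i, h i (x' l))))
    have h3 := hr (x l)
    have h4 := hr (x' l)
    omega
end

section
/- Let U be a type, let f : U → ℕ be finitely supported with F₁ = ∑_y f(y), let x ∈ U, and let w be a positive integer. On a probability space, let H : U → Fin w be a random hash function satisfying the universal collision bound. Define the row counter C(j) = ∑_{y : H(y) = j} f(y). Then 𝔼[C(H(x))] ≤ f(x) + F₁/w. -/
/-!
The counter read at `H x` is the sum over `y` in the support of `f` of `f y` times the indicator of
the event `H y = H x`. By linearity its expectation is the sum of `ℙ[H y = H x] * f y`: the term
`y = x` equals `f x`, and each other term is at most `f y / w` by the universal collision bound.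
-/

open MeasureTheory ProbabilityTheory

/-- The row counter of a Count-Min Sketch: cell `j` of the row built from hash
function `H` holds the total frequency of the items hashed to `j`. -/
def cmsRowCount {U : Type*} (w : ℕ) (f : U →₀ ℕ) (H : U → Fin w) (j : Fin w) : ℕ :=
  ∑ y ∈ f.support, if H y = j then f y else 0

/-- The single-row expected collision bound for the Count-Min Sketch (used in
the proof of Lemma 2): `𝔼[C(H(x))] ≤ f(x) + F₁/w`. -/
theorem cms_single_row_expectation
    {Ω : Type*} [MeasurableSpace Ω] (P : Measure Ω) [IsProbabilityMeasure P]
    {U : Type*} (f : U →₀ ℕ) (x : U)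
    (w : ℕ) (hw0 : 0 < w)
    (H : Ω → U → Fin w)
    (hmeas : Measurable H)
    (huniv : ∀ (a b : U), a ≠ b →
      P {ω | H ω a = H ω b} ≤ (w : ENNReal)⁻¹) :
    ∫ ω, (cmsRowCount w f (H ω) (H ω x) : ℝ) ∂P
      ≤ (f x : ℝ) + (∑ y ∈ f.support, (f y : ℝ)) / w := by
  classical
  have hset : ∀ y, MeasurableSet {ω | H ω y = H ω x} := fun y =>
    measurableSet_eq_fun (measurable_pi_iff.1 hmeas y) (measurable_pi_iff.1 hmeas x)
  have hcount : ∀ ω, (cmsRowCount w f (H ω) (H ω x) : ℝ)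
      = ∑ y ∈ f.support, {ω | H ω y = H ω x}.indicator (fun _ => (f y : ℝ)) ω := by
    intro ω
    simp [cmsRowCount, Set.indicator_apply]
  simp_rw [hcount]
  rw [integral_finsetSum _ fun y _ => (integrable_const _).indicator (hset y)]
  simp_rw [integral_indicator_const _ (hset _), smul_eq_mul]
  -- The item `x` is charged `f x` in full; every item is also charged its share `f y / w`.
  have hterm : ∀ y ∈ f.support, P.real {ω | H ω y = H ω x} * (f y : ℝ)
      ≤ (if y = x then (f x : ℝ) else 0) + (f y : ℝ) / w := by
    intro y _
    by_cases hyx : y = x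
    · subst hyx
      have : (0 : ℝ) ≤ (f y : ℝ) / w := by positivity
      simpa using this
    · have hreal : P.real {ω | H ω y = H ω x} ≤ (w : ℝ)⁻¹ := by
        have hw : (w : ENNReal)⁻¹ ≠ ⊤ := by simp [hw0.ne']
        simpa [Measure.real] using ENNReal.toReal_mono hw (huniv y x hyx)
      rw [if_neg hyx, zero_add, div_eq_inv_mul]
      gcongr
  refine (Finset.sum_le_sum hterm).trans ?_
  rw [Finset.sum_add_distrib, ← Finset.sum_div, Finset.sum_ite_eq']
  gcongr
  split_ifs <;> simp
end

section
/- Let ε ≥ 0 and δ ≥ 0 be real numbers, and let p, p', c, c', u, pA, pA' ∈ [0,1] be real numbers satisfying: (i) p = c·pA + u·(1 − pA); (ii) p' ≥ c'·pA'; (iii) c ≤ e^ε·c' + δ; (iv) 1 − pA ≤ 2δ; and (v) pA ≤ pA' + 2δ. Then p ≤ e^ε·p' + 2δ·(3/2 + e^ε + δ). -/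
/-!
Split `p` into its good part `c * pA` and its bad part `u * (1 - pA)`. The bad part is at most
`2 * δ`. By indistinguishability the good part is at most `exp ε * (c' * pA) + δ`, and since `pA ≤ pA' + 2 * δ`
and `0 ≤ c' ≤ 1`, `c' * pA ≤ p' + 2 * δ`. Altogether
`p ≤ exp ε * p' + 2 * δ * exp ε + 3 * δ`, which is stronger than the claim by `2 * δ ^ 2`.
-/

/-- The arithmetic core of the proof of Theorem 4 (privacy of LazyHH):
combining conditioning on the 'good' events with the (ε, δ)-indistinguishability
of the modified mechanisms yields (ε, δ̃)-differential privacy with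
`δ̃ = 2δ(3/2 + e^ε + δ)`. -/
theorem lazyHH_privacy_arithmetic
    (ε δ : ℝ) (hε : 0 ≤ ε) (hδ : 0 ≤ δ)
    (p p' c c' u pA pA' : ℝ)
    (hp : p ∈ Set.Icc (0:ℝ) 1) (hp' : p' ∈ Set.Icc (0:ℝ) 1)
    (hc : c ∈ Set.Icc (0:ℝ) 1) (hc' : c' ∈ Set.Icc (0:ℝ) 1)
    (hu : u ∈ Set.Icc (0:ℝ) 1)
    (hpA : pA ∈ Set.Icc (0:ℝ) 1) (hpA' : pA' ∈ Set.Icc (0:ℝ) 1)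
    (h1 : p = c * pA + u * (1 - pA))
    (h2 : c' * pA' ≤ p')
    (h3 : c ≤ Real.exp ε * c' + δ)
    (h4 : 1 - pA ≤ 2 * δ)
    (h5 : pA ≤ pA' + 2 * δ) :
    p ≤ Real.exp ε * p' + 2 * δ * (3 / 2 + Real.exp ε + δ) := by
  obtain ⟨hc'0, hc'1⟩ := hc'
  obtain ⟨hu0, hu1⟩ := hu
  obtain ⟨hA0, hA1⟩ := hpA
  have hE : 0 ≤ Real.exp ε := (Real.exp_pos ε).le
  have bad : u * (1 - pA) ≤ 2 * δ :=
    (mul_le_of_le_one_left (by linarith) hu1).trans h4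
  have good : c * pA ≤ Real.exp ε * (c' * pA) + δ := by
    have := mul_le_mul_of_nonneg_right h3 hA0
    have := mul_le_of_le_one_right hδ hA1
    linarith
  have swap : c' * pA ≤ p' + 2 * δ := by
    have := mul_le_mul_of_nonneg_left h5 hc'0
    have : c' * (2 * δ) ≤ 2 * δ := mul_le_of_le_one_left (by linarith) hc'1
    linarith
  have := mul_le_mul_of_nonneg_left swap hE
  -- The terms add up to `2 * δ * (3 / 2 + exp ε)`, leaving a slack of `2 * δ ^ 2`.
  linarith [mul_nonneg hδ hδ]
end
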